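/- arXiv:0711.3258 — 2 statements merged into one kernel-verified Lean document; each statement's English description precedes it below -/
import Mathlib

section
/- (Existence of the asymptotic time-shift r₋ with rate.) Let K ⊆ U be compact, T₀ ∈ ℝ, c₀, C₀ > 0, and let (r(t),θ(t),ρ(t),ω(t)) : (−∞,T₀] → (1,∞)×K×ℝ×ℝ^{n-1} be a solution of the Hamiltonian system satisfying r(t) ≥ c₀(1+|t|), |ρ(t)| ≤ C₀ and |ω(t)| ≤ C₀ for all t ≤ T₀. Then there exists C > 0 such that |d/dt (r(t) − 2tρ(t))| ≤ C(1+|t|)^{-1-μ} for t ≤ T₀; consequently the limit r₋ := lim_{t→−∞}(r(t) − 2tρ(t)) exists and satisfies |r₋ − (r(t) − 2tρ(t))| ≤ C'(1+|t|)^{-μ} for all t ≤ T₀. -/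
open Real Set Filter Topology

namespace Scattering

/-- The Euclidean norm of a vector in `Fin m → ℝ`. -/
noncomputable def eNorm {m : ℕ} (v : Fin m → ℝ) : ℝ := Real.sqrt (∑ j, v j ^ 2)

/-- Partial derivative in the radial variable of a function of `(r, θ)`. -/
noncomputable def pderivR {m : ℕ} (f : ℝ → (Fin m → ℝ) → ℝ) : ℝ → (Fin m → ℝ) → ℝ :=
  fun r θ => deriv (fun s => f s θ) r

/-- Partial derivative in the `j`-th angular variable of a function of `(r, θ)`. -/
noncomputable def pderivTheta {m : ℕ} (j : Fin m) (f : ℝ → (Fin m → ℝ) → ℝ) :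
    ℝ → (Fin m → ℝ) → ℝ :=
  fun r θ => fderiv ℝ (f r) θ (Pi.single j 1)

/-- Iterated angular derivatives `∂_θ^α` for a multi-index `α` (a list of directions). -/
noncomputable def thetaDerivs {m : ℕ} (α : List (Fin m)) (f : ℝ → (Fin m → ℝ) → ℝ) :
    ℝ → (Fin m → ℝ) → ℝ :=
  α.foldr pderivTheta f

/-- `DecayOn f ν S K` : for all `k, α` there is `C > 0` with
`|∂_r^k ∂_θ^α f(r,θ)| ≤ C r^{-ν-k}` for `r ∈ (S,∞)`, `θ ∈ K`. -/
def DecayOn {m : ℕ} (f : ℝ → (Fin m → ℝ) → ℝ) (ν S : ℝ) (K : Set (Fin m → ℝ)) : Prop :=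
  ∀ (k : ℕ) (α : List (Fin m)), ∃ C > 0, ∀ r ∈ Ioi S, ∀ θ ∈ K,
    |(pderivR (m := m))^[k] (thetaDerivs α f) r θ| ≤ C * r ^ (-ν - (k : ℝ))

/-- The classical kinetic energy function
`p(r,θ,ρ,ω) = ρ² + r⁻²Σ h^{jk} ω_j ω_k + a₀ ρ² + r⁻¹ Σ a₁^j ρ ω_j + r⁻² Σ a₂^{jk} ω_j ω_k`. -/
noncomputable def energy {m : ℕ} (hM : (Fin m → ℝ) → Matrix (Fin m) (Fin m) ℝ)
    (a0 : ℝ → (Fin m → ℝ) → ℝ) (a1 : ℝ → (Fin m → ℝ) → Fin m → ℝ)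
    (a2 : ℝ → (Fin m → ℝ) → Matrix (Fin m) (Fin m) ℝ) :
    ℝ → (Fin m → ℝ) → ℝ → (Fin m → ℝ) → ℝ :=
  fun r θ ρ ω =>
    ρ ^ 2 + (∑ j, ∑ k, hM θ j k * ω j * ω k) / r ^ 2 + a0 r θ * ρ ^ 2
      + (∑ j, a1 r θ j * ρ * ω j) / r + (∑ j, ∑ k, a2 r θ j k * ω j * ω k) / r ^ 2

section PhaseDerivs

variable {m : ℕ} (p : ℝ → (Fin m → ℝ) → ℝ → (Fin m → ℝ) → ℝ)

/-- `∂p/∂r`. -/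
noncomputable def pdR (r : ℝ) (θ : Fin m → ℝ) (ρ : ℝ) (ω : Fin m → ℝ) : ℝ :=
  deriv (fun s => p s θ ρ ω) r

/-- `∂p/∂θ_j`. -/
noncomputable def pdTheta (j : Fin m) (r : ℝ) (θ : Fin m → ℝ) (ρ : ℝ) (ω : Fin m → ℝ) : ℝ :=
  fderiv ℝ (fun θ' => p r θ' ρ ω) θ (Pi.single j 1)

/-- `∂p/∂ρ`. -/
noncomputable def pdRho (r : ℝ) (θ : Fin m → ℝ) (ρ : ℝ) (ω : Fin m → ℝ) : ℝ :=
  deriv (fun s => p r θ s ω) ρ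

/-- `∂p/∂ω_j`. -/
noncomputable def pdOmega (j : Fin m) (r : ℝ) (θ : Fin m → ℝ) (ρ : ℝ) (ω : Fin m → ℝ) : ℝ :=
  fderiv ℝ (fun ω' => p r θ ρ ω') ω (Pi.single j 1)

/-- `(r,θ,ρ,ω)` solves the Hamiltonian system
`ṙ = ∂p/∂ρ, θ̇ = ∂p/∂ω, ρ̇ = -∂p/∂r, ω̇ = -∂p/∂θ` on the set `I` of times. -/
def IsHamSolOn (r : ℝ → ℝ) (θ : ℝ → Fin m → ℝ) (ρ : ℝ → ℝ) (ω : ℝ → Fin m → ℝ)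
    (I : Set ℝ) : Prop :=
  ∀ t ∈ I,
    HasDerivAt r (pdRho p (r t) (θ t) (ρ t) (ω t)) t ∧
    (∀ j, HasDerivAt (fun s => θ s j) (pdOmega p j (r t) (θ t) (ρ t) (ω t)) t) ∧
    HasDerivAt ρ (-pdR p (r t) (θ t) (ρ t) (ω t)) t ∧
    (∀ j, HasDerivAt (fun s => ω s j) (-pdTheta p j (r t) (θ t) (ρ t) (ω t)) t)

/-- The interaction-picture (time-dependent) Hamiltonian `K(t,R,θ,ρ,ω) = ρ² - p(R+2tρ,θ,ρ,ω)`. -/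
noncomputable def Kint (t R : ℝ) (θ : Fin m → ℝ) (ρ : ℝ) (ω : Fin m → ℝ) : ℝ :=
  ρ ^ 2 - p (R + 2 * t * ρ) θ ρ ω

/-- `∂K/∂R`. -/
noncomputable def KdR (t R : ℝ) (θ : Fin m → ℝ) (ρ : ℝ) (ω : Fin m → ℝ) : ℝ :=
  deriv (fun x => Kint p t x θ ρ ω) R

/-- `∂K/∂θ_j`. -/
noncomputable def KdTheta (j : Fin m) (t R : ℝ) (θ : Fin m → ℝ) (ρ : ℝ) (ω : Fin m → ℝ) : ℝ :=
  fderiv ℝ (fun θ' => Kint p t R θ' ρ ω) θ (Pi.single j 1)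

/-- `∂K/∂ρ`. -/
noncomputable def KdRho (t R : ℝ) (θ : Fin m → ℝ) (ρ : ℝ) (ω : Fin m → ℝ) : ℝ :=
  deriv (fun x => Kint p t R θ x ω) ρ

/-- `∂K/∂ω_j`. -/
noncomputable def KdOmega (j : Fin m) (t R : ℝ) (θ : Fin m → ℝ) (ρ : ℝ) (ω : Fin m → ℝ) : ℝ :=
  fderiv ℝ (fun ω' => Kint p t R θ ρ ω') ω (Pi.single j 1)

end PhaseDerivs

/-- The phase space `ℝ × ℝ^m × ℝ × ℝ^m` with coordinates `(R, θ, ρ, ω)`. -/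
abbrev Phase (m : ℕ) : Type := ℝ × (Fin m → ℝ) × ℝ × (Fin m → ℝ)

/-- A curve `f = (R,θ,ρ,ω)` solves the interaction-picture Hamiltonian system
`Ṙ = ∂K/∂ρ, θ̇ = ∂K/∂ω, ρ̇ = -∂K/∂R, ω̇ = -∂K/∂θ` on the set `I` of times. -/
def IsIntSolOn {m : ℕ} (p : ℝ → (Fin m → ℝ) → ℝ → (Fin m → ℝ) → ℝ)
    (f : ℝ → Phase m) (I : Set ℝ) : Prop :=
  ∀ t ∈ I,
    HasDerivAt (fun s => (f s).1) (KdRho p t (f t).1 (f t).2.1 (f t).2.2.1 (f t).2.2.2) t ∧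
    (∀ j, HasDerivAt (fun s => (f s).2.1 j)
      (KdOmega p j t (f t).1 (f t).2.1 (f t).2.2.1 (f t).2.2.2) t) ∧
    HasDerivAt (fun s => (f s).2.2.1)
      (-(KdR p t (f t).1 (f t).2.1 (f t).2.2.1 (f t).2.2.2)) t ∧
    (∀ j, HasDerivAt (fun s => (f s).2.2.2 j)
      (-(KdTheta p j t (f t).1 (f t).2.1 (f t).2.2.1 (f t).2.2.2)) t)

/-- The data of a scattering metric of short-range type on the end `(1,∞) × U`:
the boundary metric `h` (smooth, symmetric, positive definite) and the coefficients
`a₀, a₁, a₂` of the kinetic energy, smooth on `(1,∞) × U` with the short-range decay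
`|∂_r^k ∂_θ^α a₀| ≤ C r^{-1-μ-k}`, `|∂_r^k ∂_θ^α a₁| ≤ C r^{-μ-k}`,
`|∂_r^k ∂_θ^α a₂| ≤ C r^{-μ-k}` on `(1,∞) × K` for every compact `K ⊆ U`. -/
structure Coeffs (m : ℕ) (μ : ℝ) (U : Set (Fin m → ℝ)) where
  hM : (Fin m → ℝ) → Matrix (Fin m) (Fin m) ℝ
  a0 : ℝ → (Fin m → ℝ) → ℝ
  a1 : ℝ → (Fin m → ℝ) → Fin m → ℝ
  a2 : ℝ → (Fin m → ℝ) → Matrix (Fin m) (Fin m) ℝ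
  hM_smooth : ∀ j k, ContDiffOn ℝ (⊤ : ℕ∞) (fun θ => hM θ j k) U
  hM_symm : ∀ θ ∈ U, (hM θ).IsSymm
  hM_posdef : ∀ θ ∈ U, (hM θ).PosDef
  a0_smooth : ContDiffOn ℝ (⊤ : ℕ∞) (fun z : ℝ × (Fin m → ℝ) => a0 z.1 z.2) (Ioi (1:ℝ) ×ˢ U)
  a1_smooth : ∀ j, ContDiffOn ℝ (⊤ : ℕ∞) (fun z : ℝ × (Fin m → ℝ) => a1 z.1 z.2 j) (Ioi (1:ℝ) ×ˢ U)
  a2_smooth : ∀ j k, ContDiffOn ℝ (⊤ : ℕ∞) (fun z : ℝ × (Fin m → ℝ) => a2 z.1 z.2 j k) (Ioi (1:ℝ) ×ˢ U)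
  a2_symm : ∀ r θ j k, a2 r θ j k = a2 r θ k j
  a0_decay : ∀ K : Set (Fin m → ℝ), IsCompact K → K ⊆ U → DecayOn a0 (1 + μ) 1 K
  a1_decay : ∀ K : Set (Fin m → ℝ), IsCompact K → K ⊆ U →
    ∀ j, DecayOn (fun r θ => a1 r θ j) μ 1 K
  a2_decay : ∀ K : Set (Fin m → ℝ), IsCompact K → K ⊆ U →
    ∀ j k, DecayOn (fun r θ => a2 r θ j k) μ 1 K

/-- The kinetic energy function associated to the data `c`. -/
noncomputable def Coeffs.p {m : ℕ} {μ : ℝ} {U : Set (Fin m → ℝ)} (c : Coeffs m μ U) :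
    ℝ → (Fin m → ℝ) → ℝ → (Fin m → ℝ) → ℝ :=
  energy c.hM c.a0 c.a1 c.a2

/-!
Write `q = p - ρ²`. On a region of phase space where `θ` ranges over a compact set and `(ρ, ω)` is
bounded, `q` is a symbol of order `-(1 + μ)` in `r`: it is `O(r^{-1-μ})` and each `r`-derivative
gains a factor `r⁻¹`. Along a trajectory the free motion cancels,
`d/dt (r - 2tρ) = (∂p/∂ρ - 2ρ) + 2t ∂q/∂r`,
and since `|t| ≲ r` both terms are `O(r^{-1-μ}) = O((1 + |t|)^{-1-μ})`. This is integrable at `-∞`,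
with primitive of size `(1 + |t|)^{-μ}`.
-/

section Limits

variable {E : Type*} [NormedAddCommGroup E] [NormedSpace ℝ E] {g g' : ℝ → E} {G G' : ℝ → ℝ}
  {T L : ℝ}

lemma norm_sub_le_sub_of_norm_deriv_le (hg : ∀ t ≤ T, HasDerivAt g (g' t) t)
    (hG : ∀ t ≤ T, HasDerivAt G (G' t) t) (hle : ∀ t ≤ T, ‖g' t‖ ≤ G' t) {s t : ℝ}
    (hst : s ≤ t) (ht : t ≤ T) : ‖g t - g s‖ ≤ G t - G s := by
  have hg_sub : ∀ u ≤ T, HasDerivAt (fun u => g u - g s) (g' u) u :=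
    fun u hu => (hg u hu).sub_const _
  have hG_sub : ∀ u ≤ T, HasDerivAt (fun u => G u - G s) (G' u) u :=
    fun u hu => (hG u hu).sub_const _
  exact image_norm_le_of_norm_deriv_right_le_deriv_boundary' (a := s) (b := t)
    (fun u hu => (hg_sub u (hu.2.trans ht)).continuousAt.continuousWithinAt)
    (fun u hu => (hg_sub u (hu.2.le.trans ht)).hasDerivWithinAt) (by simp)
    (fun u hu => (hG_sub u (hu.2.trans ht)).continuousAt.continuousWithinAt)
    (fun u hu => (hG_sub u (hu.2.le.trans ht)).hasDerivWithinAt)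
    (fun u hu => hle u (hu.2.le.trans ht)) ⟨hst, le_rfl⟩

lemma dist_le_dist_of_norm_deriv_le (hg : ∀ t ≤ T, HasDerivAt g (g' t) t)
    (hG : ∀ t ≤ T, HasDerivAt G (G' t) t) (hle : ∀ t ≤ T, ‖g' t‖ ≤ G' t) {s t : ℝ}
    (hs : s ≤ T) (ht : t ≤ T) : dist (g s) (g t) ≤ dist (G s) (G t) := by
  wlog hst : s ≤ t generalizing s t
  · rw [dist_comm (g s), dist_comm (G s)]
    exact this ht hs (le_of_not_ge hst)
  rw [dist_comm (g s), dist_comm (G s), dist_eq_norm]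
  exact (norm_sub_le_sub_of_norm_deriv_le hg hG hle hst ht).trans (le_abs_self _)

lemma exists_tendsto_atBot_of_norm_deriv_le [CompleteSpace E]
    (hg : ∀ t ≤ T, HasDerivAt g (g' t) t) (hG : ∀ t ≤ T, HasDerivAt G (G' t) t)
    (hle : ∀ t ≤ T, ‖g' t‖ ≤ G' t) (hL : Tendsto G atBot (𝓝 L)) :
    ∃ l, Tendsto g atBot (𝓝 l) ∧ ∀ t ≤ T, ‖l - g t‖ ≤ G t - L := by
  have hcauchy : Cauchy (map g atBot) := by
    refine cauchy_map_iff.2 ⟨inferInstance, tendsto_uniformity_iff_dist_tendsto_zero.2 ?_⟩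
    have hG_dist := tendsto_uniformity_iff_dist_tendsto_zero.1
      (cauchy_map_iff.1 hL.cauchy_map).2
    refine squeeze_zero' (.of_forall fun _ => dist_nonneg) ?_ hG_dist
    filter_upwards [(eventually_le_atBot T).prod_mk (eventually_le_atBot T)] with z hz
    exact dist_le_dist_of_norm_deriv_le hg hG hle hz.1 hz.2
  obtain ⟨l, hl⟩ := cauchy_map_iff_exists_tendsto.1 hcauchy
  refine ⟨l, hl, fun t ht => ?_⟩
  refine le_of_tendsto_of_tendsto (hl.sub_const (g t)).norm (hL.const_sub (G t)) ?_
  filter_upwards [eventually_le_atBot t] with s hs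
  rw [norm_sub_rev]
  exact norm_sub_le_sub_of_norm_deriv_le hg hG hle hs ht

lemma hasDerivAt_sub_rpow_neg {A t μ : ℝ} (hμ : μ ≠ 0) (ht : t < A) :
    HasDerivAt (fun s => (A - s) ^ (-μ) / μ) ((A - t) ^ (-(1 : ℝ) - μ)) t := by
  have hsub : HasDerivAt (fun s => A - s) (-1) t := by simpa using (hasDerivAt_id t).const_sub A
  refine ((hsub.rpow_const (p := -μ) (.inl (sub_pos.2 ht).ne')).div_const μ).congr_deriv ?_
  rw [show -(1 : ℝ) - μ = -μ - 1 by ring]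
  field_simp

lemma tendsto_sub_rpow_neg_atBot (A : ℝ) {μ : ℝ} (hμ : 0 < μ) :
    Tendsto (fun t : ℝ => (A - t) ^ (-μ)) atBot (𝓝 0) :=
  (tendsto_rpow_neg_atTop hμ).comp (tendsto_const_nhds.add_atTop tendsto_neg_atBot_atTop)

-- On `(-∞, T]` the weight `1 + |t|` is comparable to `A - t` with `A = 1 + 2|T|`, whose powers have
-- an explicit primitive across `t = 0` as well.
lemma exists_tendsto_atBot_of_norm_deriv_le_rpow [CompleteSpace E] {C μ : ℝ} (hμ : 0 < μ)
    (hC : 0 < C) (hg : ∀ t ≤ T, HasDerivAt g (g' t) t)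
    (hle : ∀ t ≤ T, ‖g' t‖ ≤ C * (1 + |t|) ^ (-(1 : ℝ) - μ)) :
    ∃ l, Tendsto g atBot (𝓝 l) ∧
      ∃ C' > 0, ∀ t ≤ T, ‖l - g t‖ ≤ C' * (1 + |t|) ^ (-μ) := by
  set A : ℝ := 1 + 2 * |T|
  set B : ℝ := C * A ^ (1 + μ)
  have hA : 0 < A := by positivity
  have hA_lower : ∀ t ≤ T, 1 + |t| ≤ A - t := fun t ht => by grind
  have hA_upper : ∀ t, (A - t) / A ≤ 1 + |t| := fun t => by
    rw [div_le_iff₀ hA]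
    nlinarith [neg_abs_le t, mul_nonneg (abs_nonneg T) (abs_nonneg t), abs_nonneg T]
  have hA_pos : ∀ t ≤ T, 0 < A - t := fun t ht => by linarith [hA_lower t ht, abs_nonneg t]
  have hweight : ∀ t ≤ T, (1 + |t|) ^ (-(1 : ℝ) - μ) ≤ A ^ (1 + μ) * (A - t) ^ (-(1 : ℝ) - μ) :=
    fun t ht => calc
      (1 + |t|) ^ (-(1 : ℝ) - μ) ≤ ((A - t) / A) ^ (-(1 : ℝ) - μ) :=
        rpow_le_rpow_of_nonpos (div_pos (hA_pos t ht) hA) (hA_upper t) (by linarith)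
      _ = A ^ (1 + μ) * (A - t) ^ (-(1 : ℝ) - μ) := by
        rw [div_rpow (hA_pos t ht).le hA.le, show -(1 : ℝ) - μ = -(1 + μ) by ring,
          rpow_neg hA.le, div_inv_eq_mul, mul_comm]
  obtain ⟨l, hl, hrate⟩ := exists_tendsto_atBot_of_norm_deriv_le hg
    (fun t ht => (hasDerivAt_sub_rpow_neg hμ.ne' (sub_pos.1 (hA_pos t ht))).const_mul B)
    (fun t ht => ((hle t ht).trans (mul_le_mul_of_nonneg_left (hweight t ht) hC.le)).trans_eq
      (mul_assoc ..).symm)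
    (((tendsto_sub_rpow_neg_atBot A hμ).div_const μ).const_mul B)
  refine ⟨l, hl, B / μ, by positivity, fun t ht => (hrate t ht).trans ?_⟩
  calc B * ((A - t) ^ (-μ) / μ) - B * (0 / μ) = B / μ * (A - t) ^ (-μ) := by ring
    _ ≤ B / μ * (1 + |t|) ^ (-μ) := mul_le_mul_of_nonneg_left
        (rpow_le_rpow_of_nonpos (by positivity) (hA_lower t ht) (by linarith)) (by positivity)

end Limits

section RadialSymbols

open Asymptotics

/-- Symbols of order `-ν` in the radial variable `r > 1`, uniformly in a parameter ranging over `S`,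
as far as the first radial derivative: `f = O(r^{-ν})` and `∂_r f = O(r^{-ν-1})`. The parameter may
comprise any of `θ, ρ, ω`. Uniform bounds are expressed as `IsBigO` along a principal filter. -/
structure IsRadialSymbol {X : Type*} (f : ℝ → X → ℝ) (ν : ℝ) (S : Set X) : Prop where
  differentiableAt : ∀ r > 1, ∀ x ∈ S, DifferentiableAt ℝ (fun s => f s x) r
  isBigO : (fun z : ℝ × X => f z.1 z.2) =O[𝓟 (Ioi 1 ×ˢ S)] fun z => z.1 ^ (-ν)
  isBigO_deriv : (fun z : ℝ × X => deriv (fun s => f s z.2) z.1) =O[𝓟 (Ioi 1 ×ˢ S)]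
    fun z => z.1 ^ (-ν - 1)

namespace IsRadialSymbol

variable {X Y ι : Type*} {f g : ℝ → X → ℝ} {ν ν' : ℝ} {S : Set X}

lemma of_isBigO_one {b : X → ℝ} (hb : b =O[𝓟 S] fun _ => (1 : ℝ)) :
    IsRadialSymbol (fun _ => b) 0 S where
  differentiableAt _ _ _ _ := differentiableAt_const _
  isBigO := by
    have hsnd : Tendsto Prod.snd (𝓟 (Ioi (1 : ℝ) ×ˢ S)) (𝓟 S) :=
      tendsto_principal_principal.2 fun _ hz => hz.2
    simpa only [neg_zero, rpow_zero, Function.comp_def] using hb.comp_tendsto hsnd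
  isBigO_deriv := by simpa using isBigO_zero _ _

lemma inv (S : Set X) : IsRadialSymbol (fun r _ => r⁻¹) 1 S where
  differentiableAt r hr _ _ := differentiableAt_inv (by linarith)
  isBigO := by simpa only [rpow_neg_one] using isBigO_refl _ _
  isBigO_deriv := by
    refine .of_norm_right (.of_bound' (eventually_principal.2 fun z ⟨(hz : 1 < z.1), _⟩ => ?_))
    have hz0 : 0 < z.1 := by linarith
    rw [deriv_inv, norm_neg, norm_norm, rpow_sub_one hz0.ne', rpow_neg_one, sq, mul_inv,
      div_eq_mul_inv]

lemma comp {T : Set Y} {φ : Y → X} (hf : IsRadialSymbol f ν S) (hφ : MapsTo φ T S) :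
    IsRadialSymbol (fun r y => f r (φ y)) ν T := by
  have hmap : Tendsto (fun z : ℝ × Y => (z.1, φ z.2)) (𝓟 (Ioi 1 ×ˢ T)) (𝓟 (Ioi 1 ×ˢ S)) :=
    tendsto_principal_principal.2 fun z hz => ⟨hz.1, hφ hz.2⟩
  exact ⟨fun r hr y hy => hf.differentiableAt r hr _ (hφ hy), hf.isBigO.comp_tendsto hmap,
    hf.isBigO_deriv.comp_tendsto hmap⟩

lemma mono_order (hf : IsRadialSymbol f ν S) (h : ν' ≤ ν) : IsRadialSymbol f ν' S := by
  have hrpow : ∀ a b : ℝ, a ≤ b →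
      (fun z : ℝ × X => z.1 ^ a) =O[𝓟 (Ioi 1 ×ˢ S)] fun z => z.1 ^ b := fun a b hab =>
    .of_bound' <| eventually_principal.2 fun z ⟨(hz : 1 < z.1), _⟩ => by
      have hz0 : 0 ≤ z.1 := by linarith
      rw [norm_of_nonneg (rpow_nonneg hz0 _), norm_of_nonneg (rpow_nonneg hz0 _)]
      exact rpow_le_rpow_of_exponent_le hz.le hab
  exact ⟨hf.differentiableAt, hf.isBigO.trans (hrpow _ _ (by linarith)),
    hf.isBigO_deriv.trans (hrpow _ _ (by linarith))⟩

lemma add (hf : IsRadialSymbol f ν S) (hg : IsRadialSymbol g ν S) :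
    IsRadialSymbol (fun r x => f r x + g r x) ν S where
  differentiableAt r hr x hx := (hf.differentiableAt r hr x hx).add (hg.differentiableAt r hr x hx)
  isBigO := hf.isBigO.add hg.isBigO
  isBigO_deriv := (hf.isBigO_deriv.add hg.isBigO_deriv).congr' (eventually_principal.2 fun _ hz =>
    (deriv_fun_add (hf.differentiableAt _ hz.1 _ hz.2) (hg.differentiableAt _ hz.1 _ hz.2)).symm)
    .rfl

lemma sum {s : Finset ι} {F : ι → ℝ → X → ℝ} (hF : ∀ i ∈ s, IsRadialSymbol (F i) ν S) :
    IsRadialSymbol (fun r x => ∑ i ∈ s, F i r x) ν S where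
  differentiableAt r hr x hx := .fun_sum fun i hi => (hF i hi).differentiableAt r hr x hx
  isBigO := .fun_sum fun i hi => (hF i hi).isBigO
  isBigO_deriv := (IsBigO.fun_sum fun i hi => (hF i hi).isBigO_deriv).congr'
    (eventually_principal.2 fun _ hz =>
      (deriv_fun_sum fun i hi => (hF i hi).differentiableAt _ hz.1 _ hz.2).symm) .rfl

lemma mul (hf : IsRadialSymbol f ν S) (hg : IsRadialSymbol g ν' S) :
    IsRadialSymbol (fun r x => f r x * g r x) (ν + ν') S := by
  have hrpow : ∀ a b c : ℝ, a + b = c →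
      (fun z : ℝ × X => z.1 ^ a * z.1 ^ b) =ᶠ[𝓟 (Ioi 1 ×ˢ S)] fun z => z.1 ^ c :=
    fun a b c habc => eventually_principal.2 fun _ ⟨hz, _⟩ => by
      simp only [← rpow_add (zero_lt_one.trans hz), habc]
  refine ⟨fun r hr x hx => (hf.differentiableAt r hr x hx).mul (hg.differentiableAt r hr x hx),
    (hf.isBigO.mul hg.isBigO).congr' .rfl (hrpow _ _ _ (by ring)), ?_⟩
  have hf'g := (hf.isBigO_deriv.mul hg.isBigO).congr' .rfl
    (hrpow _ _ (-(ν + ν') - 1) (by ring))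
  have hfg' := (hf.isBigO.mul hg.isBigO_deriv).congr' .rfl
    (hrpow _ _ (-(ν + ν') - 1) (by ring))
  exact (hf'g.add hfg').congr' (eventually_principal.2 fun _ hz => (deriv_fun_mul
    (hf.differentiableAt _ hz.1 _ hz.2) (hg.differentiableAt _ hz.1 _ hz.2)).symm) .rfl

lemma mul_isBigO_one {b : X → ℝ} (hf : IsRadialSymbol f ν S) (hb : b =O[𝓟 S] fun _ => (1 : ℝ)) :
    IsRadialSymbol (fun r x => f r x * b x) ν S := by
  simpa only [add_zero] using hf.mul (of_isBigO_one hb)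

lemma div_radius (hf : IsRadialSymbol f ν S) : IsRadialSymbol (fun r x => f r x / r) (ν + 1) S := by
  simpa only [div_eq_mul_inv] using hf.mul (inv S)

lemma div_radius_sq (hf : IsRadialSymbol f ν S) :
    IsRadialSymbol (fun r x => f r x / r ^ 2) (ν + 2) S := by
  simpa only [div_div, ← sq, add_assoc, one_add_one_eq_two] using hf.div_radius.div_radius

end IsRadialSymbol

lemma DecayOn.isRadialSymbol {m : ℕ} {f : ℝ → (Fin m → ℝ) → ℝ} {ν : ℝ} {K : Set (Fin m → ℝ)}
    (hf : DecayOn f ν 1 K) (hdiff : ∀ r > 1, ∀ θ ∈ K, DifferentiableAt ℝ (fun s => f s θ) r) :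
    IsRadialSymbol f ν K := by
  have hdecay : ∀ k : ℕ, (fun z : ℝ × (Fin m → ℝ) => pderivR^[k] f z.1 z.2)
      =O[𝓟 (Ioi 1 ×ˢ K)] fun z => z.1 ^ (-ν - k) := fun k => by
    obtain ⟨C, -, hC⟩ := hf k []
    refine .of_norm_right (.of_bound C (eventually_principal.2 fun z ⟨hr, hθ⟩ => ?_))
    have hr0 : 0 ≤ z.1 := zero_le_one.trans (le_of_lt hr)
    rw [norm_norm, norm_of_nonneg (rpow_nonneg hr0 _)]
    exact hC z.1 hr z.2 hθ
  exact ⟨hdiff, by simpa using hdecay 0, by simpa [pderivR] using hdecay 1⟩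

lemma differentiableAt_radial {X : Type*} [NormedAddCommGroup X] [NormedSpace ℝ X]
    {f : ℝ → X → ℝ} {V : Set (ℝ × X)} (hV : IsOpen V)
    (hf : DifferentiableOn ℝ (fun z : ℝ × X => f z.1 z.2) V) {r : ℝ} {x : X} (hrx : (r, x) ∈ V) :
    DifferentiableAt ℝ (fun s => f s x) r :=
  (hf.differentiableAt (hV.mem_nhds hrx)).comp (f := fun s => (s, x)) r (by fun_prop)

end RadialSymbols

section Energy

open Asymptotics Bornology

/-- The coordinates `(θ, ρ, ω)` of phase space other than `r`, which serve as the parameter of a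
radial symbol; `Phase m` is `ℝ × RadialFiber m`. -/
abbrev RadialFiber (m : ℕ) : Type := (Fin m → ℝ) × ℝ × (Fin m → ℝ)

variable {m : ℕ} {μ : ℝ} {K : Set (Fin m → ℝ)} {B : Set (ℝ × (Fin m → ℝ))}
  {hM : (Fin m → ℝ) → Matrix (Fin m) (Fin m) ℝ} {a0 : ℝ → (Fin m → ℝ) → ℝ}
  {a1 : ℝ → (Fin m → ℝ) → Fin m → ℝ} {a2 : ℝ → (Fin m → ℝ) → Matrix (Fin m) (Fin m) ℝ}

lemma isBigO_one_of_isBounded {X F : Type*} [NormedAddCommGroup F] {S : Set X} {b : X → F}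
    (hb : IsBounded (b '' S)) : b =O[𝓟 S] fun _ => (1 : ℝ) := by
  obtain ⟨C, hC⟩ := hb.exists_norm_le
  exact .of_bound C (eventually_principal.2 fun x hx => by
    simpa using hC _ (mem_image_of_mem b hx))

lemma isBigO_momenta_one (K : Set (Fin m → ℝ)) (hB : IsBounded B) :
    (fun x : RadialFiber m => x.2) =O[𝓟 (K ×ˢ B)] fun _ => (1 : ℝ) :=
  isBigO_one_of_isBounded (hB.subset (image_subset_iff.2 fun _ hx => hx.2))

lemma isBigO_rho_one (K : Set (Fin m → ℝ)) (hB : IsBounded B) :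
    (fun x : RadialFiber m => x.2.1) =O[𝓟 (K ×ˢ B)] fun _ => (1 : ℝ) :=
  (isBigO_prod_left.1 (isBigO_momenta_one K hB)).1

lemma isBigO_omega_one (K : Set (Fin m → ℝ)) (hB : IsBounded B) (j : Fin m) :
    (fun x : RadialFiber m => x.2.2 j) =O[𝓟 (K ×ˢ B)] fun _ => (1 : ℝ) :=
  isBigO_pi.1 (isBigO_prod_left.1 (isBigO_momenta_one K hB)).2 j

lemma isRadialSymbol_quadraticForm {ν : ℝ} {A : ℝ → (Fin m → ℝ) → Matrix (Fin m) (Fin m) ℝ}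
    (hA : ∀ j k, IsRadialSymbol (fun r θ => A r θ j k) ν K) (hB : IsBounded B) :
    IsRadialSymbol (fun r (x : RadialFiber m) =>
      ∑ j, ∑ k, A r x.1 j k * x.2.2 j * x.2.2 k) ν (K ×ˢ B) :=
  .sum fun j _ => .sum fun k _ => (((hA j k).comp fun _ hx => hx.1).mul_isBigO_one
    (isBigO_omega_one K hB j)).mul_isBigO_one (isBigO_omega_one K hB k)

lemma isRadialSymbol_energy_sub_sq (hμ : μ ≤ 1)
    (hh : ∀ j k, (fun θ => hM θ j k) =O[𝓟 K] fun _ => (1 : ℝ)) (ha0 : IsRadialSymbol a0 (1 + μ) K)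
    (ha1 : ∀ j, IsRadialSymbol (fun r θ => a1 r θ j) μ K)
    (ha2 : ∀ j k, IsRadialSymbol (fun r θ => a2 r θ j k) μ K) (hB : IsBounded B) :
    IsRadialSymbol (fun r (x : RadialFiber m) =>
      energy hM a0 a1 a2 r x.1 x.2.1 x.2.2 - x.2.1 ^ 2) (1 + μ) (K ×ˢ B) := by
  have hρ := isBigO_rho_one K hB
  have hquad := (isRadialSymbol_quadraticForm (fun j k => IsRadialSymbol.of_isBigO_one (hh j k)) hB)
    |>.div_radius_sq
    |>.mono_order (ν' := 1 + μ) (by linarith)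
  have hsq : IsRadialSymbol (fun r (x : RadialFiber m) => a0 r x.1 * x.2.1 ^ 2)
      (1 + μ) (K ×ˢ B) :=
    (ha0.comp fun _ hx => hx.1).mul_isBigO_one (by simpa using hρ.pow 2)
  have hmixed : IsRadialSymbol (fun r (x : RadialFiber m) =>
      (∑ j, a1 r x.1 j * x.2.1 * x.2.2 j) / r) (1 + μ) (K ×ˢ B) :=
    add_comm μ 1 ▸ (IsRadialSymbol.sum fun j _ => (((ha1 j).comp fun _ hx => hx.1).mul_isBigO_one
      hρ).mul_isBigO_one (isBigO_omega_one K hB j)).div_radius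
  have hquad' := (isRadialSymbol_quadraticForm ha2 hB).div_radius_sq
    |>.mono_order (ν' := 1 + μ) (by linarith)
  convert ((hquad.add hsq).add hmixed).add hquad' using 3
  rw [energy]
  ring

lemma pdRho_energy (r : ℝ) (θ : Fin m → ℝ) (ρ : ℝ) (ω : Fin m → ℝ) :
    pdRho (energy hM a0 a1 a2) r θ ρ ω =
      2 * ρ + (a0 r θ * (2 * ρ) + (∑ j, a1 r θ j * ω j) / r) := by
  have hsq : HasDerivAt (fun s : ℝ => s ^ 2) (2 * ρ) ρ := by simpa using hasDerivAt_pow 2 ρ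
  have hlin : HasDerivAt (fun s => ∑ j, a1 r θ j * s * ω j) (∑ j, a1 r θ j * ω j) ρ :=
    .fun_sum fun j _ => by
      simpa using ((hasDerivAt_id ρ).const_mul (a1 r θ j)).mul_const (ω j)
  exact ((((hsq.add_const _).add (hsq.const_mul _)).add (hlin.div_const r)).add_const _).deriv.trans
    (add_assoc ..)

lemma isBigO_pdRho_energy_sub (ha0 : IsRadialSymbol a0 (1 + μ) K)
    (ha1 : ∀ j, IsRadialSymbol (fun r θ => a1 r θ j) μ K) (hB : IsBounded B) :
    (fun z : Phase m => pdRho (energy hM a0 a1 a2) z.1 z.2.1 z.2.2.1 z.2.2.2 - 2 * z.2.2.1)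
      =O[𝓟 (Ioi 1 ×ˢ K ×ˢ B)] fun z => z.1 ^ (-(1 + μ)) := by
  simp only [pdRho_energy, add_sub_cancel_left]
  have hsq : IsRadialSymbol (fun r (x : RadialFiber m) => a0 r x.1 * (2 * x.2.1))
      (1 + μ) (K ×ˢ B) :=
    (ha0.comp fun _ hx => hx.1).mul_isBigO_one ((isBigO_rho_one K hB).const_mul_left 2)
  have hmixed : IsRadialSymbol (fun r (x : RadialFiber m) =>
      (∑ j, a1 r x.1 j * x.2.2 j) / r) (1 + μ) (K ×ˢ B) :=
    add_comm μ 1 ▸ (IsRadialSymbol.sum fun j _ => ((ha1 j).comp fun _ hx => hx.1).mul_isBigO_one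
      (isBigO_omega_one K hB j)).div_radius
  exact (hsq.add hmixed).isBigO

end Energy

namespace Coeffs

open Asymptotics Bornology

variable {m : ℕ} {μ : ℝ} {U K : Set (Fin m → ℝ)} {B : Set (ℝ × (Fin m → ℝ))} (c : Coeffs m μ U)

lemma isBigO_hM_one (hK : IsCompact K) (hKU : K ⊆ U) (j k : Fin m) :
    (fun θ => c.hM θ j k) =O[𝓟 K] fun _ => (1 : ℝ) :=
  isBigO_one_of_isBounded
    (hK.image_of_continuousOn ((c.hM_smooth j k).continuousOn.mono hKU)).isBounded

lemma isRadialSymbol_a0 (hU : IsOpen U) (hK : IsCompact K) (hKU : K ⊆ U) :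
    IsRadialSymbol c.a0 (1 + μ) K :=
  (c.a0_decay K hK hKU).isRadialSymbol fun _ hr _ hθ => differentiableAt_radial
    (isOpen_Ioi.prod hU) (c.a0_smooth.differentiableOn (by simp)) ⟨hr, hKU hθ⟩

lemma isRadialSymbol_a1 (hU : IsOpen U) (hK : IsCompact K) (hKU : K ⊆ U) (j : Fin m) :
    IsRadialSymbol (fun r θ => c.a1 r θ j) μ K :=
  (c.a1_decay K hK hKU j).isRadialSymbol fun _ hr _ hθ => differentiableAt_radial
    (f := fun r θ => c.a1 r θ j) (isOpen_Ioi.prod hU)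
    ((c.a1_smooth j).differentiableOn (by simp)) ⟨hr, hKU hθ⟩

lemma isRadialSymbol_a2 (hU : IsOpen U) (hK : IsCompact K) (hKU : K ⊆ U) (j k : Fin m) :
    IsRadialSymbol (fun r θ => c.a2 r θ j k) μ K :=
  (c.a2_decay K hK hKU j k).isRadialSymbol fun _ hr _ hθ => differentiableAt_radial
    (f := fun r θ => c.a2 r θ j k) (isOpen_Ioi.prod hU)
    ((c.a2_smooth j k).differentiableOn (by simp)) ⟨hr, hKU hθ⟩

lemma isRadialSymbol_p_sub_sq (hμ : μ ≤ 1) (hU : IsOpen U) (hK : IsCompact K) (hKU : K ⊆ U)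
    (hB : IsBounded B) :
    IsRadialSymbol (fun r (x : RadialFiber m) =>
      c.p r x.1 x.2.1 x.2.2 - x.2.1 ^ 2) (1 + μ) (K ×ˢ B) :=
  isRadialSymbol_energy_sub_sq hμ (c.isBigO_hM_one hK hKU) (c.isRadialSymbol_a0 hU hK hKU)
    (c.isRadialSymbol_a1 hU hK hKU) (c.isRadialSymbol_a2 hU hK hKU) hB

lemma isBigO_pdRho_p_sub (hU : IsOpen U) (hK : IsCompact K) (hKU : K ⊆ U) (hB : IsBounded B) :
    (fun z : Phase m => pdRho c.p z.1 z.2.1 z.2.2.1 z.2.2.2 - 2 * z.2.2.1)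
      =O[𝓟 (Ioi 1 ×ˢ K ×ˢ B)] fun z => z.1 ^ (-(1 + μ)) :=
  isBigO_pdRho_energy_sub (c.isRadialSymbol_a0 hU hK hKU) (c.isRadialSymbol_a1 hU hK hKU) hB

end Coeffs

section Trajectories

open Asymptotics

variable {m : ℕ} {p : ℝ → (Fin m → ℝ) → ℝ → (Fin m → ℝ) → ℝ} {μ c₀ T₀ : ℝ}
  {S : Set (RadialFiber m)} {I : Set ℝ}
  {r : ℝ → ℝ} {θ : ℝ → Fin m → ℝ} {ρ : ℝ → ℝ} {ω : ℝ → Fin m → ℝ}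

lemma norm_le_eNorm (v : Fin m → ℝ) : ‖v‖ ≤ eNorm v :=
  (pi_norm_le_iff_of_nonneg (sqrt_nonneg _)).2 fun j => abs_le_sqrt <|
    Finset.single_le_sum (f := fun j => v j ^ 2) (fun _ _ => sq_nonneg _) (Finset.mem_univ j)

lemma IsHamSolOn.hasDerivAt_sub_two_mul (hsol : IsHamSolOn p r θ ρ ω I) {t : ℝ} (ht : t ∈ I) :
    HasDerivAt (fun s => r s - 2 * s * ρ s)
      (pdRho p (r t) (θ t) (ρ t) (ω t) - 2 * ρ t
        + 2 * (t * pdR p (r t) (θ t) (ρ t) (ω t))) t := by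
  obtain ⟨hr, -, hρ, -⟩ := hsol t ht
  refine (hr.sub (((hasDerivAt_id t).const_mul 2).mul hρ)).congr_deriv ?_
  simp only [id]
  ring

lemma isBigO_rpow_one_add_abs (hc₀ : 0 < c₀) {ν : ℝ} (hν : 0 ≤ ν)
    (hescape : ∀ t ∈ I, c₀ * (1 + |t|) ≤ r t) :
    (fun t => r t ^ (-ν)) =O[𝓟 I] fun t => (1 + |t|) ^ (-ν) :=
  .of_bound (c₀ ^ (-ν)) <| eventually_principal.2 fun t ht => by
    have hr : 0 ≤ r t := le_trans (by positivity) (hescape t ht)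
    rw [norm_of_nonneg (rpow_nonneg hr _), norm_of_nonneg (by positivity),
      ← mul_rpow hc₀.le (by positivity)]
    exact rpow_le_rpow_of_nonpos (by positivity) (hescape t ht) (neg_nonpos.2 hν)

lemma isBigO_id_of_linear_escape (hc₀ : 0 < c₀)
    (hescape : ∀ t ∈ I, c₀ * (1 + |t|) ≤ r t) : (fun t => t) =O[𝓟 I] r :=
  .of_bound c₀⁻¹ <| eventually_principal.2 fun t ht => by
    rw [inv_mul_eq_div, le_div_iff₀ hc₀]
    exact (by rw [norm_eq_abs]; linarith : ‖t‖ * c₀ ≤ c₀ * (1 + |t|)).trans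
      ((hescape t ht).trans (le_norm_self _))

lemma IsHamSolOn.isBigO_deriv_sub_two_mul (hsol : IsHamSolOn p r θ ρ ω I) (hμ : 0 ≤ 1 + μ)
    (hp : IsRadialSymbol (fun r x => p r x.1 x.2.1 x.2.2 - x.2.1 ^ 2) (1 + μ) S)
    (hpρ : (fun z : Phase m => pdRho p z.1 z.2.1 z.2.2.1 z.2.2.2 - 2 * z.2.2.1)
      =O[𝓟 (Ioi 1 ×ˢ S)] fun z => z.1 ^ (-(1 + μ)))
    (hc₀ : 0 < c₀) (hdom : ∀ t ∈ I, r t ∈ Ioi 1 ∧ (θ t, ρ t, ω t) ∈ S)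
    (hescape : ∀ t ∈ I, c₀ * (1 + |t|) ≤ r t) :
    deriv (fun s => r s - 2 * s * ρ s) =O[𝓟 I] fun t => (1 + |t|) ^ (-(1 + μ)) := by
  have hcurve : Tendsto (fun t => ((r t, θ t, ρ t, ω t) : Phase m)) (𝓟 I) (𝓟 (Ioi 1 ×ˢ S)) :=
    tendsto_principal_principal.2 hdom
  have hpdRho := hpρ.comp_tendsto hcurve
  have hpdR : (fun t => pdR p (r t) (θ t) (ρ t) (ω t)) =O[𝓟 I] fun t => r t ^ (-(1 + μ) - 1) := by
    simpa [pdR, Function.comp_def] using hp.isBigO_deriv.comp_tendsto hcurve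
  have hmul : (fun t => r t * r t ^ (-(1 + μ) - 1)) =ᶠ[𝓟 I] fun t => r t ^ (-(1 + μ)) :=
    eventually_principal.2 fun t ht => by
      have hr : r t ≠ 0 := (zero_lt_one.trans (hdom t ht).1).ne'
      simp only [rpow_sub_one hr, mul_div_cancel₀ _ hr]
  have htpdR := ((isBigO_id_of_linear_escape hc₀ hescape).mul hpdR).congr' .rfl hmul
  refine ((hpdRho.add (htpdR.const_mul_left 2)).congr' ?_ .rfl).trans
    (isBigO_rpow_one_add_abs hc₀ hμ hescape)
  exact eventually_principal.2 fun t ht => (hsol.hasDerivAt_sub_two_mul ht).deriv.symm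

theorem statement_7_general (hμ : 0 < μ)
    (hp : IsRadialSymbol (fun r x => p r x.1 x.2.1 x.2.2 - x.2.1 ^ 2) (1 + μ) S)
    (hpρ : (fun z : Phase m => pdRho p z.1 z.2.1 z.2.2.1 z.2.2.2 - 2 * z.2.2.1)
      =O[𝓟 (Ioi 1 ×ˢ S)] fun z => z.1 ^ (-(1 + μ)))
    (hc₀ : 0 < c₀) (hsol : IsHamSolOn p r θ ρ ω (Iic T₀))
    (hdom : ∀ t ≤ T₀, r t ∈ Ioi 1 ∧ (θ t, ρ t, ω t) ∈ S)
    (hescape : ∀ t ≤ T₀, c₀ * (1 + |t|) ≤ r t) :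
    ∃ C > 0,
      (∀ t ≤ T₀, ∃ d : ℝ, HasDerivAt (fun s => r s - 2 * s * ρ s) d t ∧
        |d| ≤ C * (1 + |t|) ^ (-(1 : ℝ) - μ)) ∧
      (∃ rm : ℝ, Tendsto (fun t => r t - 2 * t * ρ t) atBot (𝓝 rm) ∧
        ∃ C' > 0, ∀ t ≤ T₀, |rm - (r t - 2 * t * ρ t)| ≤ C' * (1 + |t|) ^ (-μ)) := by
  obtain ⟨C, hC, hbound⟩ :=
    (hsol.isBigO_deriv_sub_two_mul (by linarith) hp hpρ hc₀ hdom hescape).exists_pos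
  have hderiv : ∀ t ≤ T₀, HasDerivAt _ (deriv (fun s => r s - 2 * s * ρ s) t) t :=
    fun t ht => (hsol.hasDerivAt_sub_two_mul ht).differentiableAt.hasDerivAt
  have hle : ∀ t ≤ T₀, ‖deriv (fun s => r s - 2 * s * ρ s) t‖ ≤ C * (1 + |t|) ^ (-(1 : ℝ) - μ) :=
    fun t ht => by
      have hpos : 0 ≤ (1 + |t|) ^ (-(1 : ℝ) - μ) := by positivity
      simpa only [neg_add', norm_of_nonneg hpos] using isBigOWith_principal.1 hbound t ht
  exact ⟨C, hC, fun t ht => ⟨_, hderiv t ht, hle t ht⟩,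
    exists_tendsto_atBot_of_norm_deriv_le_rpow hμ hC hderiv hle⟩

end Trajectories

/-- Existence of the asymptotic time-shift `r₋` with rate. Along a
backward trajectory with linear escape and bounded `ρ, ω`, the derivative of
`r(t) - 2tρ(t)` is `O(⟨t⟩^{-1-μ})`; hence the limit `r₋` exists with rate `⟨t⟩^{-μ}`. -/
theorem statement_7 {m : ℕ} (hm : 1 ≤ m) {μ : ℝ} (hμ : μ ∈ Ioo (0:ℝ) 1)
    {U : Set (Fin m → ℝ)} (hU : IsOpen U) (c : Coeffs m μ U)
    (K : Set (Fin m → ℝ)) (hK : IsCompact K) (hKU : K ⊆ U) (T₀ : ℝ)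
    (c₀ C₀ : ℝ) (hc₀ : 0 < c₀) (hC₀ : 0 < C₀)
    (r : ℝ → ℝ) (θ : ℝ → Fin m → ℝ) (ρ : ℝ → ℝ) (ω : ℝ → Fin m → ℝ)
    (hsol : IsHamSolOn c.p r θ ρ ω (Iic T₀))
    (hdom : ∀ t ≤ T₀, r t ∈ Ioi (1:ℝ) ∧ θ t ∈ K ∧ r t ≥ c₀ * (1 + |t|) ∧
      |ρ t| ≤ C₀ ∧ eNorm (ω t) ≤ C₀) :
    ∃ C > (0:ℝ),
      (∀ t ≤ T₀, ∃ d : ℝ, HasDerivAt (fun s => r s - 2 * s * ρ s) d t ∧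
        |d| ≤ C * (1 + |t|) ^ (-(1:ℝ) - μ)) ∧
      (∃ rm : ℝ, Tendsto (fun t => r t - 2 * t * ρ t) atBot (𝓝 rm) ∧
        ∃ C' > (0:ℝ), ∀ t ≤ T₀, |rm - (r t - 2 * t * ρ t)| ≤ C' * (1 + |t|) ^ (-μ)) := by
  refine statement_7_general (S := K ×ˢ Metric.closedBall 0 C₀) hμ.1
    (c.isRadialSymbol_p_sub_sq hμ.2.le hU hK hKU Metric.isBounded_closedBall)
    (c.isBigO_pdRho_p_sub hU hK hKU Metric.isBounded_closedBall) hc₀ hsol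
    (fun t ht => ?_) fun t ht => (hdom t ht).2.2.1
  obtain ⟨hr, hθ, -, hρ, hω⟩ := hdom t ht
  exact ⟨hr, hθ, mem_closedBall_zero_iff.2 (max_le hρ ((norm_le_eNorm _).trans hω))⟩

end Scattering
end

section
/- (Existence of scattering data θ₋, ρ⁻, ω⁻ with rates.) Let K ⊆ U be compact, T₀ ∈ ℝ, c₀, C₀ > 0, and let (r(t),θ(t),ρ(t),ω(t)) : (−∞,T₀] → (1,∞)×K×ℝ×ℝ^{n-1} be a solution of the Hamiltonian system satisfying r(t) ≥ c₀(1+|t|), |ρ(t)| ≤ C₀ and |ω(t)| ≤ C₀ for all t ≤ T₀. Then the limits θ₋ := lim_{t→−∞}θ(t), ρ⁻ := lim_{t→−∞}ρ(t), ω⁻ := lim_{t→−∞}ω(t) exist, and there is C > 0 such that for all t ≤ T₀: |θ₋ − θ(t)| ≤ C(1+|t|)^{-μ}, |ρ⁻ − ρ(t)| ≤ C(1+|t|)^{-1-μ}, and |ω⁻ − ω(t)| ≤ C(1+|t|)^{-μ}. -/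
open Real Set Filter Topology

namespace Scattering

/-!
In the energy every term other than `ρ²` carries a negative power of `r`: differentiating in `r`
gains a further power, and differentiating in `θ` or `ω` loses none.  Hence, as long as the momenta
stay bounded and `μ ≤ 1`, the flow satisfies `ρ̇ = O(r^{-2-μ})` and `θ̇, ω̇ = O(r^{-1-μ})`.  Since
`r ≳ 1 + |t|`, these rates are integrable at `-∞`, and integrating them from `-∞` to `t` yields
the limits together with the decay of the remainders.
-/

open Asymptotics

section LimitAtBot

variable {E : Type*} [NormedAddCommGroup E] [NormedSpace ℝ E] {f f' : ℝ → E} {T : ℝ}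

lemma norm_sub_le_of_norm_deriv_le_deriv {B B' : ℝ → ℝ} {s t : ℝ}
    (hf : ∀ x ∈ Icc s t, HasDerivAt f (f' x) x) (hB : ∀ x ∈ Icc s t, HasDerivAt B (B' x) x)
    (bound : ∀ x ∈ Icc s t, ‖f' x‖ ≤ B' x) (hst : s ≤ t) : ‖f t - f s‖ ≤ B t - B s := by
  have fence := image_norm_le_of_norm_deriv_right_le_deriv_boundary' (a := s) (b := t)
    (f := fun x => f x - f s) (B := fun x => B x - B s)
    (fun x hx => ((hf x hx).sub_const _).continuousAt.continuousWithinAt)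
    (fun x hx => ((hf x (Ico_subset_Icc_self hx)).sub_const _).hasDerivWithinAt)
    (by simp)
    (fun x hx => ((hB x hx).sub_const _).continuousAt.continuousWithinAt)
    (fun x hx => ((hB x (Ico_subset_Icc_self hx)).sub_const _).hasDerivWithinAt)
    (fun x hx => bound x (Ico_subset_Icc_self hx))
  exact fence (right_mem_Icc.2 hst)

lemma exists_tendsto_of_dist_le_dist {ι X Y : Type*} [PseudoMetricSpace X] [CompleteSpace X]
    [PseudoMetricSpace Y] {l : Filter ι} [l.NeBot] {u : ι → X} {v : ι → Y} {y : Y}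
    (hv : Tendsto v l (𝓝 y))
    (huv : ∀ᶠ z in l ×ˢ l, dist (u z.1) (u z.2) ≤ dist (v z.1) (v z.2)) :
    ∃ x, Tendsto u l (𝓝 x) := by
  rw [← cauchy_map_iff_exists_tendsto, cauchy_map_iff']
  have v_cauchy := cauchy_map_iff'.1 hv.cauchy_map
  rw [Metric.uniformity_basis_dist.tendsto_right_iff] at v_cauchy ⊢
  intro ε hε
  filter_upwards [v_cauchy ε hε, huv] with z hz hle
  exact hle.trans_lt hz

lemma exists_tendsto_atBot_of_norm_deriv_le_deriv [CompleteSpace E] {B B' : ℝ → ℝ}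
    (hf : ∀ t ≤ T, HasDerivAt f (f' t) t) (hB : ∀ t ≤ T, HasDerivAt B (B' t) t)
    (bound : ∀ t ≤ T, ‖f' t‖ ≤ B' t) (hB_zero : Tendsto B atBot (𝓝 0)) :
    ∃ L, Tendsto f atBot (𝓝 L) ∧ ∀ t ≤ T, ‖L - f t‖ ≤ B t := by
  have increment : ∀ t ≤ T, ∀ s ≤ t, ‖f t - f s‖ ≤ B t - B s := fun t ht s hst =>
    norm_sub_le_of_norm_deriv_le_deriv (fun x hx => hf x (hx.2.trans ht))
      (fun x hx => hB x (hx.2.trans ht)) (fun x hx => bound x (hx.2.trans ht)) hst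
  have dist_le : ∀ s ≤ T, ∀ t ≤ T, dist (f s) (f t) ≤ dist (B s) (B t) := by
    intro s hs t ht
    wlog hst : s ≤ t generalizing s t
    · simpa only [dist_comm] using this t ht s hs (le_of_not_ge hst)
    rw [dist_comm, dist_eq_norm, dist_comm, dist_eq_norm]
    exact (increment t ht s hst).trans (le_abs_self _)
  have below := (eventually_le_atBot T).prod_mk (eventually_le_atBot T)
  obtain ⟨L, hL⟩ := exists_tendsto_of_dist_le_dist hB_zero
    (below.mono fun z hz => dist_le z.1 hz.1 z.2 hz.2)
  refine ⟨L, hL, fun t ht => ?_⟩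
  have lim_left : Tendsto (fun s => ‖f t - f s‖) atBot (𝓝 ‖f t - L‖) := (hL.const_sub _).norm
  have lim_right : Tendsto (fun s => B t - B s) atBot (𝓝 (B t)) := by
    simpa using hB_zero.const_sub (B t)
  rw [norm_sub_rev]
  exact le_of_tendsto_of_tendsto lim_left lim_right
    ((eventually_le_atBot t).mono fun s hs => increment t ht s hs)

lemma isTheta_one_add_abs (T : ℝ) :
    (fun t => 1 + |t|) =Θ[𝓟 (Iic T)] fun t => 1 + |T| - t := by
  have one_le : ∀ t ∈ Iic T, 1 ≤ 1 + |T| - t := fun t (ht : t ≤ T) => by linarith [le_abs_self T]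
  constructor
  · refine isBigO_principal.2 ⟨1 + 2 * |T|, fun t ht => ?_⟩
    have := one_le t ht
    rw [Real.norm_of_nonneg (by positivity), Real.norm_of_nonneg (by linarith)]
    have : |t| ≤ |T| + (|T| - t) :=
      abs_le.2 ⟨by linarith [abs_nonneg T], by linarith [show t ≤ T from ht, le_abs_self T]⟩
    nlinarith [abs_nonneg T]
  · refine isBigO_principal.2 ⟨1 + |T|, fun t ht => ?_⟩
    have := one_le t ht
    rw [Real.norm_of_nonneg (by linarith), Real.norm_of_nonneg (by positivity)]
    nlinarith [neg_abs_le t, mul_nonneg (abs_nonneg T) (abs_nonneg t)]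

lemma isTheta_one_add_abs_rpow (T a : ℝ) :
    (fun t => (1 + |t|) ^ a) =Θ[𝓟 (Iic T)] fun t => (1 + |T| - t) ^ a :=
  IsTheta.rpow (.of_forall fun t => show 0 ≤ 1 + |t| by positivity)
    (eventually_principal.2 fun t ht => show 0 ≤ 1 + |T| - t by
      linarith [le_abs_self T, mem_Iic.1 ht])
    (isTheta_one_add_abs T)

lemma hasDerivAt_const_sub_rpow_neg_div {a ν t : ℝ} (hν : ν ≠ 0) (ht : t < a) :
    HasDerivAt (fun s => (a - s) ^ (-ν) / ν) ((a - t) ^ (-(1 + ν))) t := by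
  have h := (((hasDerivAt_id t).const_sub a).rpow_const (p := -ν)
    (Or.inl (sub_pos.2 ht).ne')).div_const ν
  refine h.congr_deriv ?_
  rw [id, show -ν - 1 = -(1 + ν) by ring]
  field_simp

lemma tendsto_const_sub_rpow_neg_atBot (a : ℝ) {ν : ℝ} (hν : 0 < ν) :
    Tendsto (fun s => (a - s) ^ (-ν)) atBot (𝓝 0) :=
  (tendsto_rpow_neg_atTop hν).comp (tendsto_atTop_add_const_left _ a tendsto_neg_atBot_atTop)

lemma exists_tendsto_atBot_of_deriv_isBigO [CompleteSpace E] {ν : ℝ} (hν : 0 < ν)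
    (hf : ∀ t ≤ T, HasDerivAt f (f' t) t)
    (hf' : f' =O[𝓟 (Iic T)] fun t => (1 + |t|) ^ (-(1 + ν))) :
    ∃ L, Tendsto f atBot (𝓝 L) ∧ (fun t => L - f t) =O[𝓟 (Iic T)] fun t => (1 + |t|) ^ (-ν) := by
  have lt_of_le : ∀ t ≤ T, t < 1 + |T| := fun t ht => by linarith [le_abs_self T]
  obtain ⟨A, hA⟩ := isBigO_principal.1 (hf'.trans_isTheta (isTheta_one_add_abs_rpow T _))
  obtain ⟨L, hL, hbound⟩ := exists_tendsto_atBot_of_norm_deriv_le_deriv hf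
    (fun t ht => (hasDerivAt_const_sub_rpow_neg_div hν.ne' (lt_of_le t ht)).const_mul A)
    (fun t ht => (hA t ht).trans_eq <| by
      rw [Real.norm_of_nonneg (Real.rpow_nonneg (sub_pos.2 (lt_of_le t ht)).le _)])
    (by simpa using ((tendsto_const_sub_rpow_neg_atBot (1 + |T|) hν).div_const ν).const_mul A)
  refine ⟨L, hL, IsBigO.trans_isTheta ?_ (isTheta_one_add_abs_rpow T (-ν)).symm⟩
  refine isBigO_principal.2 ⟨A / ν, fun t ht => (hbound t ht).trans_eq ?_⟩
  rw [Real.norm_of_nonneg (Real.rpow_nonneg (sub_pos.2 (lt_of_le t ht)).le _)]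
  ring

end LimitAtBot

section PowerWeights

variable {α : Type*} {l : Filter α} {r : α → ℝ}

lemma isBigO_rpow_rpow_of_exponent_le (hr : ∀ᶠ x in l, 1 ≤ r x) {a b : ℝ} (hab : a ≤ b) :
    (fun x => r x ^ a) =O[l] fun x => r x ^ b := by
  refine IsBigO.of_bound' (hr.mono fun x hx => ?_)
  have hx0 : 0 ≤ r x := zero_le_one.trans hx
  rw [Real.norm_of_nonneg (Real.rpow_nonneg hx0 a), Real.norm_of_nonneg (Real.rpow_nonneg hx0 b)]
  exact Real.rpow_le_rpow_of_exponent_le hx hab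

lemma isBigO_div_pow_rpow (hr : ∀ᶠ x in l, 1 ≤ r x) {f : α → ℝ} {a b : ℝ} (n : ℕ)
    (hf : f =O[l] fun x => r x ^ a) (hab : a - n ≤ b) :
    (fun x => f x / r x ^ n) =O[l] fun x => r x ^ b := by
  have quotient : (fun x => r x ^ a / r x ^ n) =ᶠ[l] fun x => r x ^ (a - n) :=
    hr.mono fun x hx => (Real.rpow_sub_natCast (zero_lt_one.trans_le hx).ne' a n).symm
  have numerator : (fun x => f x / r x ^ n) =O[l] fun x => r x ^ a / r x ^ n := by
    simpa only [div_eq_mul_inv] using hf.mul (isBigO_refl (fun x => (r x ^ n)⁻¹) l)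
  exact (numerator.trans_eventuallyEq quotient).trans (isBigO_rpow_rpow_of_exponent_le hr hab)

lemma isBigO_rpow_neg_of_le {g : α → ℝ} {c a : ℝ} (hc : 0 < c) (hg : ∀ᶠ x in l, 0 < g x)
    (hgr : ∀ᶠ x in l, c * g x ≤ r x) (ha : 0 ≤ a) :
    (fun x => r x ^ (-a)) =O[l] fun x => g x ^ (-a) := by
  refine IsBigO.of_bound (c ^ (-a)) ?_
  filter_upwards [hg, hgr] with x hx hxr
  have hcx : 0 < c * g x := mul_pos hc hx
  rw [Real.norm_of_nonneg (Real.rpow_nonneg (hcx.trans_le hxr).le _),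
    Real.norm_of_nonneg (Real.rpow_nonneg hx.le _), ← Real.mul_rpow hc.le hx.le]
  exact Real.rpow_le_rpow_of_nonpos hcx hxr (neg_nonpos.2 ha)

lemma hasDerivAt_div_pow_self {f : ℝ → ℝ} {f' x : ℝ} (hf : HasDerivAt f f' x) (hx : x ≠ 0)
    (n : ℕ) :
    HasDerivAt (fun s => f s / s ^ n) (f' / x ^ n - n * f x / x ^ (n + 1)) x := by
  refine (hf.div (hasDerivAt_pow n x) (pow_ne_zero n hx)).congr_deriv ?_
  rcases n with _ | n
  · simp
  · field_simp
    simp only [Nat.cast_add, Nat.cast_one, add_tsub_cancel_right]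
    ring

end PowerWeights

section Euclidean

variable {m : ℕ}

lemma eNorm_eq_norm_toLp (v : Fin m → ℝ) : eNorm v = ‖WithLp.toLp 2 v‖ := by
  simp [eNorm, EuclideanSpace.norm_eq]

lemma abs_apply_le_eNorm (v : Fin m → ℝ) (j : Fin m) : |v j| ≤ eNorm v := by
  rw [eNorm_eq_norm_toLp]
  exact PiLp.norm_apply_le (WithLp.toLp 2 v) j

lemma eNorm_isBigO {α : Type*} (l : Filter α) (v : α → Fin m → ℝ) :
    (fun x => eNorm (v x)) =O[l] v := by
  simp only [eNorm_eq_norm_toLp]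
  exact ((PiLp.continuousLinearEquiv 2 ℝ fun _ : Fin m => ℝ).symm.toContinuousLinearMap.isBigO_comp
    v l).norm_left

end Euclidean

section EnergyDerivatives

variable {m : ℕ}

/-- The quadratic form `∑ A_{jk} ω_j ω_k`, in the shape in which it occurs in `energy`. -/
def quadForm (A : Matrix (Fin m) (Fin m) ℝ) (ω : Fin m → ℝ) : ℝ :=
  ∑ j, ∑ k, A j k * ω j * ω k

/-- The mixed form `∑ a_j ρ ω_j`, in the shape in which it occurs in `energy`. -/
def mixedForm (a : Fin m → ℝ) (ρ : ℝ) (ω : Fin m → ℝ) : ℝ :=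
  ∑ j, a j * ρ * ω j

variable {E : Type*} [NormedAddCommGroup E] [NormedSpace ℝ E] {x : E}

lemma hasFDerivAt_quadForm_coeff {A : E → Matrix (Fin m) (Fin m) ℝ}
    {A' : Fin m → Fin m → E →L[ℝ] ℝ} (hA : ∀ j k, HasFDerivAt (fun y => A y j k) (A' j k) x)
    (ω : Fin m → ℝ) :
    HasFDerivAt (fun y => quadForm (A y) ω) (∑ j, ∑ k, ω k • ω j • A' j k) x :=
  HasFDerivAt.fun_sum fun j _ => HasFDerivAt.fun_sum fun k _ =>
    ((hA j k).mul_const (ω j)).mul_const (ω k)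

lemma hasFDerivAt_mixedForm_coeff {a : E → Fin m → ℝ} {a' : Fin m → E →L[ℝ] ℝ}
    (ha : ∀ j, HasFDerivAt (fun y => a y j) (a' j) x) (ρ : ℝ) (ω : Fin m → ℝ) :
    HasFDerivAt (fun y => mixedForm (a y) ρ ω) (∑ j, ω j • ρ • a' j) x :=
  HasFDerivAt.fun_sum fun j _ => ((ha j).mul_const ρ).mul_const (ω j)

variable {hM : (Fin m → ℝ) → Matrix (Fin m) (Fin m) ℝ} {a0 : ℝ → (Fin m → ℝ) → ℝ}
  {a1 : ℝ → (Fin m → ℝ) → Fin m → ℝ} {a2 : ℝ → (Fin m → ℝ) → Matrix (Fin m) (Fin m) ℝ}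
  {r : ℝ} {θ : Fin m → ℝ}

lemma pdR_energy (hr : r ≠ 0) (ha0 : DifferentiableAt ℝ (fun s => a0 s θ) r)
    (ha1 : ∀ j, DifferentiableAt ℝ (fun s => a1 s θ j) r)
    (ha2 : ∀ j k, DifferentiableAt ℝ (fun s => a2 s θ j k) r) (ρ : ℝ) (ω : Fin m → ℝ) :
    pdR (energy hM a0 a1 a2) r θ ρ ω =
      -2 * quadForm (hM θ) ω / r ^ 3 + pderivR a0 r θ * ρ ^ 2
      + (mixedForm (fun j => pderivR (fun s x => a1 s x j) r θ) ρ ω / r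
        - mixedForm (a1 r θ) ρ ω / r ^ 2)
      + (quadForm (.of fun j k => pderivR (fun s x => a2 s x j k) r θ) ω / r ^ 2
        - 2 * quadForm (a2 r θ) ω / r ^ 3) := by
  have metric_term := hasDerivAt_div_pow_self (hasDerivAt_const r (quadForm (hM θ) ω)) hr 2
  have mixed_term := hasDerivAt_div_pow_self (n := 1) (f := fun s => mixedForm (a1 s θ) ρ ω)
    (f' := mixedForm (fun j => pderivR (fun s x => a1 s x j) r θ) ρ ω)
    (HasDerivAt.fun_sum fun j _ => ((ha1 j).hasDerivAt.mul_const ρ).mul_const (ω j)) hr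
  have perturbation_term := hasDerivAt_div_pow_self (n := 2) (f := fun s => quadForm (a2 s θ) ω)
    (f' := quadForm (.of fun j k => pderivR (fun s x => a2 s x j k) r θ) ω)
    (HasDerivAt.fun_sum fun j _ => HasDerivAt.fun_sum fun k _ =>
      ((ha2 j k).hasDerivAt.mul_const (ω j)).mul_const (ω k)) hr
  simp only [pow_one] at mixed_term
  refine (((((metric_term.const_add (ρ ^ 2)).add (ha0.hasDerivAt.mul_const (ρ ^ 2))).add
    mixed_term).add perturbation_term).congr_deriv ?_).deriv
  simp only [zero_div, Nat.cast_ofNat, Nat.reduceAdd, zero_sub, pderivR, Nat.cast_one, one_mul]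
  ring

lemma pdTheta_energy (hhM : ∀ j k, DifferentiableAt ℝ (fun x => hM x j k) θ)
    (ha0 : DifferentiableAt ℝ (a0 r) θ) (ha1 : ∀ j, DifferentiableAt ℝ (fun x => a1 r x j) θ)
    (ha2 : ∀ j k, DifferentiableAt ℝ (fun x => a2 r x j k) θ) (ρ : ℝ) (ω : Fin m → ℝ)
    (i : Fin m) :
    pdTheta (energy hM a0 a1 a2) i r θ ρ ω =
      quadForm (.of fun j k => fderiv ℝ (fun x => hM x j k) θ (Pi.single i 1)) ω / r ^ 2
      + pderivTheta i a0 r θ * ρ ^ 2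
      + mixedForm (fun j => pderivTheta i (fun s x => a1 s x j) r θ) ρ ω / r
      + quadForm (.of fun j k => pderivTheta i (fun s x => a2 s x j k) r θ) ω / r ^ 2 := by
  have h := (((((hasFDerivAt_quadForm_coeff (fun j k => (hhM j k).hasFDerivAt) ω).mul_const
    (r ^ 2)⁻¹).const_add (ρ ^ 2)).add (ha0.hasFDerivAt.mul_const (ρ ^ 2))).add
    ((hasFDerivAt_mixedForm_coeff (fun j => (ha1 j).hasFDerivAt) ρ ω).mul_const r⁻¹)).add
    ((hasFDerivAt_quadForm_coeff (fun j k => (ha2 j k).hasFDerivAt) ω).mul_const (r ^ 2)⁻¹)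
  refine (congrArg (· (Pi.single i 1)) h.fderiv).trans ?_
  simp [quadForm, mixedForm, pderivTheta, div_eq_inv_mul, mul_comm, mul_left_comm]

-- The constant codomain family of `hasFDerivAt_apply` is not found by unification.
lemma hasFDerivAt_coord (ω : Fin m → ℝ) (j : Fin m) :
    HasFDerivAt (fun w : Fin m → ℝ => w j)
      (ContinuousLinearMap.proj (R := ℝ) (φ := fun _ : Fin m => ℝ) j) ω :=
  hasFDerivAt_apply j ω

lemma fderiv_quadForm_single (A : Matrix (Fin m) (Fin m) ℝ) (ω : Fin m → ℝ) (i : Fin m) :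
    fderiv ℝ (quadForm A) ω (Pi.single i 1) = ∑ k, (A i k + A k i) * ω k := by
  have h : HasFDerivAt (quadForm A) _ ω :=
    HasFDerivAt.fun_sum fun j _ => HasFDerivAt.fun_sum fun k _ =>
      ((hasFDerivAt_coord ω j).const_mul (A j k)).mul (hasFDerivAt_coord ω k)
  rw [h.fderiv]
  simp only [add_mul, Finset.sum_add_distrib]
  simp [Pi.single_apply, mul_comm, add_comm]

lemma pdOmega_energy (ρ : ℝ) (ω : Fin m → ℝ) (i : Fin m) :
    pdOmega (energy hM a0 a1 a2) i r θ ρ ω =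
      (∑ k, (hM θ i k + hM θ k i) * ω k) / r ^ 2 + a1 r θ i * ρ / r
      + (∑ k, (a2 r θ i k + a2 r θ k i) * ω k) / r ^ 2 := by
  have quad_diff (A : Matrix (Fin m) (Fin m) ℝ) : DifferentiableAt ℝ (quadForm A) ω := by
    unfold quadForm
    fun_prop
  have mixed_deriv : HasFDerivAt (mixedForm (a1 r θ) ρ) _ ω :=
    HasFDerivAt.fun_sum fun j _ => (hasFDerivAt_coord ω j).const_mul (a1 r θ j * ρ)
  have h := (((((quad_diff (hM θ)).hasFDerivAt.mul_const (r ^ 2)⁻¹).const_add (ρ ^ 2)).add_const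
    (a0 r θ * ρ ^ 2)).add (mixed_deriv.mul_const r⁻¹)).add
    ((quad_diff (a2 r θ)).hasFDerivAt.mul_const (r ^ 2)⁻¹)
  refine (congrArg (· (Pi.single i 1)) h.fderiv).trans ?_
  simp [fderiv_quadForm_single, Pi.single_apply, div_eq_inv_mul, mul_comm]

end EnergyDerivatives

section ShortRange

variable {m : ℕ}

/-- The Hamiltonian `p` is short-range of order `μ` on the phase-space region `D`: its partial
derivatives in `r`, `θ` and `ω` are `O(r^{-2-μ})`, `O(r^{-1-μ})` and `O(r^{-1-μ})`, uniformly on all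
of `D`.  This is all that the existence of scattering data requires. -/
structure IsShortRangeOn (p : ℝ → (Fin m → ℝ) → ℝ → (Fin m → ℝ) → ℝ) (μ : ℝ)
    (D : Set (Phase m)) : Prop where
  pdR_isBigO : (fun z : Phase m => pdR p z.1 z.2.1 z.2.2.1 z.2.2.2) =O[𝓟 D]
    fun z => z.1 ^ (-(2 + μ))
  pdTheta_isBigO : ∀ i, (fun z : Phase m => pdTheta p i z.1 z.2.1 z.2.2.1 z.2.2.2) =O[𝓟 D]
    fun z => z.1 ^ (-(1 + μ))
  pdOmega_isBigO : ∀ i, (fun z : Phase m => pdOmega p i z.1 z.2.1 z.2.2.1 z.2.2.2) =O[𝓟 D]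
    fun z => z.1 ^ (-(1 + μ))

/-- The region of phase space over `(1, ∞) × K` in which both momenta `ρ` and `ω` are bounded by
`M`. -/
def boundedMomentumRegion (K : Set (Fin m → ℝ)) (M : ℝ) : Set (Phase m) :=
  {z | 1 < z.1 ∧ z.2.1 ∈ K ∧ |z.2.2.1| ≤ M ∧ eNorm z.2.2.2 ≤ M}

lemma DecayOn.isBigO {f : ℝ → (Fin m → ℝ) → ℝ} {ν S : ℝ} {K : Set (Fin m → ℝ)}
    (hf : DecayOn f ν S K) (k : ℕ) (α : List (Fin m)) :
    (fun z : ℝ × (Fin m → ℝ) => pderivR^[k] (thetaDerivs α f) z.1 z.2) =O[𝓟 (Ioi S ×ˢ K)]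
      fun z => z.1 ^ (-ν - k) := by
  obtain ⟨C, hC, bound⟩ := hf k α
  refine isBigO_principal.2 ⟨C, fun z hz => (bound z.1 hz.1 z.2 hz.2).trans ?_⟩
  exact mul_le_mul_of_nonneg_left (Real.le_norm_self _) hC.le

section BoundedMomentum

variable {K : Set (Fin m → ℝ)} {M : ℝ}

local notation "𝓡" => 𝓟 (boundedMomentumRegion K M)

lemma eventually_one_le_radius : ∀ᶠ z : Phase m in 𝓡, 1 ≤ z.1 :=
  eventually_principal.2 fun _ hz => hz.1.le

lemma radialMomentum_isBigO_one : (fun z : Phase m => z.2.2.1) =O[𝓡] fun _ => (1 : ℝ) :=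
  isBigO_principal.2 ⟨M, fun _ hz => by simpa using hz.2.2.1⟩

lemma angularMomentum_isBigO_one (j : Fin m) :
    (fun z : Phase m => z.2.2.2 j) =O[𝓡] fun _ => (1 : ℝ) :=
  isBigO_principal.2 ⟨M, fun z hz => by
    simpa using (abs_apply_le_eNorm z.2.2.2 j).trans hz.2.2.2⟩

lemma quadForm_isBigO {A : Phase m → Matrix (Fin m) (Fin m) ℝ} {g : Phase m → ℝ}
    (hA : ∀ j k, (fun z => A z j k) =O[𝓡] g) :
    (fun z => quadForm (A z) z.2.2.2) =O[𝓡] g := by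
  refine IsBigO.fun_sum fun j _ => IsBigO.fun_sum fun k _ => ?_
  simpa using ((hA j k).mul (angularMomentum_isBigO_one j)).mul (angularMomentum_isBigO_one k)

lemma mixedForm_isBigO {a : Phase m → Fin m → ℝ} {g : Phase m → ℝ}
    (ha : ∀ j, (fun z => a z j) =O[𝓡] g) :
    (fun z => mixedForm (a z) z.2.2.1 z.2.2.2) =O[𝓡] g := by
  refine IsBigO.fun_sum fun j _ => ?_
  simpa using ((ha j).mul radialMomentum_isBigO_one).mul (angularMomentum_isBigO_one j)

lemma mul_radialMomentum_sq_isBigO {b g : Phase m → ℝ} (hb : b =O[𝓡] g) :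
    (fun z => b z * z.2.2.1 ^ 2) =O[𝓡] g := by
  simpa using hb.mul (radialMomentum_isBigO_one.pow 2)

lemma sum_mul_angularMomentum_isBigO {a : Phase m → Fin m → ℝ} {g : Phase m → ℝ}
    (ha : ∀ k, (fun z => a z k) =O[𝓡] g) :
    (fun z => ∑ k, a z k * z.2.2.2 k) =O[𝓡] g := by
  refine IsBigO.fun_sum fun k _ => ?_
  simpa using (ha k).mul (angularMomentum_isBigO_one k)

lemma isBigO_div_radius_pow {f : Phase m → ℝ} {a b : ℝ} (n : ℕ)
    (hf : f =O[𝓡] fun z => z.1 ^ a) (hab : a - n ≤ b) :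
    (fun z => f z / z.1 ^ n) =O[𝓡] fun z => z.1 ^ b :=
  isBigO_div_pow_rpow eventually_one_le_radius n hf hab

lemma angular_isBigO_one {f : (Fin m → ℝ) → ℝ} (hK : IsCompact K) (hf : ContinuousOn f K) :
    (fun z : Phase m => f z.2.1) =O[𝓡] fun z => z.1 ^ (0 : ℝ) := by
  have h : f =O[𝓟 K] fun _ => (1 : ℝ) := hf.isBigO_principal hK (by simp)
  simp only [Real.rpow_zero]
  exact h.comp_tendsto (k := fun z : Phase m => z.2.1)
    (tendsto_principal_principal.2 fun _ hz => hz.2.1)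

lemma DecayOn.isBigO_radius {f : ℝ → (Fin m → ℝ) → ℝ} {ν : ℝ} (hf : DecayOn f ν 1 K) (k : ℕ)
    (α : List (Fin m)) :
    (fun z : Phase m => pderivR^[k] (thetaDerivs α f) z.1 z.2.1) =O[𝓡]
      fun z => z.1 ^ (-ν - k) :=
  (hf.isBigO k α).comp_tendsto (k := fun z : Phase m => (z.1, z.2.1))
    (tendsto_principal_principal.2 fun _ hz => ⟨hz.1, hz.2.1⟩)

end BoundedMomentum

lemma differentiableAt_slices {E F G : Type*} [NormedAddCommGroup E] [NormedSpace ℝ E]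
    [NormedAddCommGroup F] [NormedSpace ℝ F] [NormedAddCommGroup G] [NormedSpace ℝ G]
    {f : E → F → G} {s : Set E} {t : Set F} (hs : IsOpen s) (ht : IsOpen t)
    (hf : DifferentiableOn ℝ (fun z : E × F => f z.1 z.2) (s ×ˢ t)) {x : E} (hx : x ∈ s) {y : F}
    (hy : y ∈ t) :
    DifferentiableAt ℝ (fun x' => f x' y) x ∧ DifferentiableAt ℝ (f x) y := by
  have h := hf.differentiableAt ((hs.prod ht).mem_nhds (mk_mem_prod hx hy))
  exact ⟨h.comp (f := fun x' => (x', y)) x (by fun_prop),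
    h.comp (f := fun y' => (x, y')) y (by fun_prop)⟩

namespace Coeffs

variable {μ : ℝ} {U : Set (Fin m → ℝ)} (c : Coeffs m μ U) {K : Set (Fin m → ℝ)} {M : ℝ}

section Differentiability

variable {r : ℝ} {θ : Fin m → ℝ}

lemma differentiableAt_a0 (hU : IsOpen U) (hr : 1 < r) (hθ : θ ∈ U) :
    DifferentiableAt ℝ (fun s => c.a0 s θ) r ∧ DifferentiableAt ℝ (c.a0 r) θ :=
  differentiableAt_slices isOpen_Ioi hU (c.a0_smooth.differentiableOn (by simp)) hr hθ

lemma differentiableAt_a1 (hU : IsOpen U) (hr : 1 < r) (hθ : θ ∈ U) (j : Fin m) :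
    DifferentiableAt ℝ (fun s => c.a1 s θ j) r ∧ DifferentiableAt ℝ (fun x => c.a1 r x j) θ :=
  differentiableAt_slices (f := fun r θ => c.a1 r θ j) isOpen_Ioi hU
    ((c.a1_smooth j).differentiableOn (by simp)) hr hθ

lemma differentiableAt_a2 (hU : IsOpen U) (hr : 1 < r) (hθ : θ ∈ U) (j k : Fin m) :
    DifferentiableAt ℝ (fun s => c.a2 s θ j k) r ∧ DifferentiableAt ℝ (fun x => c.a2 r x j k) θ :=
  differentiableAt_slices (f := fun r θ => c.a2 r θ j k) isOpen_Ioi hU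
    ((c.a2_smooth j k).differentiableOn (by simp)) hr hθ

end Differentiability

lemma pdR_p_isBigO (hμ : μ ≤ 1) (hU : IsOpen U) (hK : IsCompact K) (hKU : K ⊆ U) :
    (fun z : Phase m => pdR c.p z.1 z.2.1 z.2.2.1 z.2.2.2) =O[𝓟 (boundedMomentumRegion K M)]
      fun z => z.1 ^ (-(2 + μ)) := by
  have formula := eventually_principal.2 fun (z : Phase m) (hz : z ∈ boundedMomentumRegion K M) =>
    (pdR_energy (hM := c.hM) (zero_lt_one.trans hz.1).ne'
      (c.differentiableAt_a0 hU hz.1 (hKU hz.2.1)).1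
      (fun j => (c.differentiableAt_a1 hU hz.1 (hKU hz.2.1) j).1)
      (fun j k => (c.differentiableAt_a2 hU hz.1 (hKU hz.2.1) j k).1) z.2.2.1 z.2.2.2).symm
  refine IsBigO.congr' ?_ formula .rfl
  have hM_bound := quadForm_isBigO (M := M) fun j k =>
    angular_isBigO_one hK ((c.hM_smooth j k).continuousOn.mono hKU)
  have a0_deriv_bound := mul_radialMomentum_sq_isBigO (M := M)
    ((c.a0_decay K hK hKU).isBigO_radius 1 [])
  have a1_bound := mixedForm_isBigO (M := M)
    fun j => (c.a1_decay K hK hKU j).isBigO_radius 0 []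
  have a1_deriv_bound := mixedForm_isBigO (M := M)
    fun j => (c.a1_decay K hK hKU j).isBigO_radius 1 []
  have a2_bound := quadForm_isBigO (M := M) (A := fun z => c.a2 z.1 z.2.1)
    fun j k => (c.a2_decay K hK hKU j k).isBigO_radius 0 []
  have a2_deriv_bound := quadForm_isBigO (M := M) (A := fun z => .of fun j k => _)
    fun j k => (c.a2_decay K hK hKU j k).isBigO_radius 1 []
  refine (((?_ : IsBigO ..).add ?_).add (.sub ?_ ?_)).add (.sub ?_ ?_)
  · exact isBigO_div_radius_pow 3 (hM_bound.const_mul_left (-2)) (by push_cast; linarith)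
  · exact a0_deriv_bound.trans
      (isBigO_rpow_rpow_of_exponent_le eventually_one_le_radius (by push_cast; linarith))
  · simpa only [pow_one] using! isBigO_div_radius_pow 1 a1_deriv_bound (b := -(2 + μ))
      (by push_cast; linarith)
  · exact isBigO_div_radius_pow 2 a1_bound (by push_cast; linarith)
  · exact isBigO_div_radius_pow 2 a2_deriv_bound (by push_cast; linarith)
  · exact isBigO_div_radius_pow 3 (a2_bound.const_mul_left 2) (by push_cast; linarith)

lemma pdTheta_p_isBigO (hμ : μ ≤ 1) (hU : IsOpen U) (hK : IsCompact K) (hKU : K ⊆ U)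
    (i : Fin m) :
    (fun z : Phase m => pdTheta c.p i z.1 z.2.1 z.2.2.1 z.2.2.2)
      =O[𝓟 (boundedMomentumRegion K M)] fun z => z.1 ^ (-(1 + μ)) := by
  have formula := eventually_principal.2 fun (z : Phase m) (hz : z ∈ boundedMomentumRegion K M) =>
    (pdTheta_energy
      (fun j k => ((c.hM_smooth j k).differentiableOn (by simp)).differentiableAt
        (hU.mem_nhds (hKU hz.2.1)))
      (c.differentiableAt_a0 hU hz.1 (hKU hz.2.1)).2
      (fun j => (c.differentiableAt_a1 hU hz.1 (hKU hz.2.1) j).2)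
      (fun j k => (c.differentiableAt_a2 hU hz.1 (hKU hz.2.1) j k).2) z.2.2.1 z.2.2.2 i).symm
  refine IsBigO.congr' ?_ formula .rfl
  have hM_deriv_bound := quadForm_isBigO (M := M) (A := fun z => .of fun j k => _)
    fun j k => angular_isBigO_one hK
      ((((c.hM_smooth j k).continuousOn_fderiv_of_isOpen hU (by simp)).mono hKU).clm_apply
        (continuousOn_const (c := Pi.single i 1)))
  have a0_deriv_bound := mul_radialMomentum_sq_isBigO (M := M)
    ((c.a0_decay K hK hKU).isBigO_radius 0 [i])
  have a1_deriv_bound := mixedForm_isBigO (M := M)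
    fun j => (c.a1_decay K hK hKU j).isBigO_radius 0 [i]
  have a2_deriv_bound := quadForm_isBigO (M := M) (A := fun z => .of fun j k => _)
    fun j k => (c.a2_decay K hK hKU j k).isBigO_radius 0 [i]
  refine (((?_ : IsBigO ..).add ?_).add ?_).add ?_
  · exact isBigO_div_radius_pow 2 hM_deriv_bound (by push_cast; linarith)
  · simpa only [Nat.cast_zero, sub_zero] using! a0_deriv_bound
  · simpa only [pow_one] using! isBigO_div_radius_pow 1 a1_deriv_bound (b := -(1 + μ))
      (by push_cast; linarith)
  · exact isBigO_div_radius_pow 2 a2_deriv_bound (by push_cast; linarith)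

lemma pdOmega_p_isBigO (hμ : μ ≤ 1) (hK : IsCompact K) (hKU : K ⊆ U) (i : Fin m) :
    (fun z : Phase m => pdOmega c.p i z.1 z.2.1 z.2.2.1 z.2.2.2)
      =O[𝓟 (boundedMomentumRegion K M)] fun z => z.1 ^ (-(1 + μ)) := by
  have hM_bound (j k : Fin m) := angular_isBigO_one (M := M) hK
    ((c.hM_smooth j k).continuousOn.mono hKU)
  have a1_bound := ((c.a1_decay K hK hKU i).isBigO_radius (M := M) 0 []).mul
    radialMomentum_isBigO_one
  have a2_bound (j k : Fin m) := (c.a2_decay K hK hKU j k).isBigO_radius (M := M) 0 []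
  simp only [mul_one] at a1_bound
  simp only [p, pdOmega_energy]
  refine ((?_ : IsBigO ..).add ?_).add ?_
  · exact isBigO_div_radius_pow 2
      (sum_mul_angularMomentum_isBigO fun k => (hM_bound i k).add (hM_bound k i))
      (by push_cast; linarith)
  · simpa only [pow_one] using! isBigO_div_radius_pow 1 a1_bound (b := -(1 + μ))
      (by push_cast; linarith)
  · exact isBigO_div_radius_pow 2
      (sum_mul_angularMomentum_isBigO fun k => (a2_bound i k).add (a2_bound k i))
      (by push_cast; linarith)

theorem isShortRangeOn_p (hμ : μ ≤ 1) (hU : IsOpen U) (hK : IsCompact K) (hKU : K ⊆ U) :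
    IsShortRangeOn c.p μ (boundedMomentumRegion K M) where
  pdR_isBigO := c.pdR_p_isBigO hμ hU hK hKU
  pdTheta_isBigO := c.pdTheta_p_isBigO hμ hU hK hKU
  pdOmega_isBigO := c.pdOmega_p_isBigO hμ hK hKU

end Coeffs

end ShortRange

section ScatteringData

variable {m : ℕ} {p : ℝ → (Fin m → ℝ) → ℝ → (Fin m → ℝ) → ℝ} {μ : ℝ} {D : Set (Phase m)}
  {T₀ c₀ : ℝ} {r : ℝ → ℝ} {θ : ℝ → Fin m → ℝ} {ρ : ℝ → ℝ} {ω : ℝ → Fin m → ℝ}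

lemma isBigO_comp_curve_of_le_radius {g : Phase m → ℝ} {a : ℝ} {γ : ℝ → Phase m} {I : Set ℝ}
    (ha : 0 ≤ a) (hg : g =O[𝓟 D] fun z => z.1 ^ (-a)) (hc₀ : 0 < c₀) (hγ : MapsTo γ I D)
    (hr : ∀ t ∈ I, c₀ * (1 + |t|) ≤ (γ t).1) :
    (fun t => g (γ t)) =O[𝓟 I] fun t => (1 + |t|) ^ (-a) :=
  (hg.comp_tendsto (tendsto_principal_principal.2 hγ)).trans <|
    isBigO_rpow_neg_of_le hc₀ (.of_forall fun t => show 0 < 1 + |t| by positivity)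
      (eventually_principal.2 hr) ha

lemma eventually_abs_le_mul_one_add_abs_rpow {f : ℝ → ℝ} {a : ℝ} {I : Set ℝ}
    (hf : f =O[𝓟 I] fun t => (1 + |t|) ^ a) :
    ∀ᶠ C in atTop, ∀ t ∈ I, |f t| ≤ C * (1 + |t|) ^ a := by
  filter_upwards [isBigO_iff_eventually.1 hf] with C hC t ht
  have := eventually_principal.1 hC t ht
  rwa [Real.norm_eq_abs, Real.norm_of_nonneg (by positivity)] at this

theorem statement_8_general (hμ : 0 < μ) (hp : IsShortRangeOn p μ D) (hc₀ : 0 < c₀)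
    (hsol : IsHamSolOn p r θ ρ ω (Iic T₀)) (hD : ∀ t ≤ T₀, (r t, θ t, ρ t, ω t) ∈ D)
    (hr : ∀ t ≤ T₀, c₀ * (1 + |t|) ≤ r t) :
    ∃ (θm : Fin m → ℝ) (ρm : ℝ) (ωm : Fin m → ℝ),
      Tendsto θ atBot (𝓝 θm) ∧ Tendsto ρ atBot (𝓝 ρm) ∧ Tendsto ω atBot (𝓝 ωm) ∧
      ∃ C > (0 : ℝ), ∀ t ≤ T₀,
        eNorm (θm - θ t) ≤ C * (1 + |t|) ^ (-μ) ∧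
        |ρm - ρ t| ≤ C * (1 + |t|) ^ (-(1 : ℝ) - μ) ∧
        eNorm (ωm - ω t) ≤ C * (1 + |t|) ^ (-μ) := by
  have rate {g : Phase m → ℝ} {a : ℝ} (ha : 0 ≤ a) (hg : g =O[𝓟 D] fun z => z.1 ^ (-a)) :
      (fun t => g (r t, θ t, ρ t, ω t)) =O[𝓟 (Iic T₀)] fun t => (1 + |t|) ^ (-a) :=
    isBigO_comp_curve_of_le_radius ha hg hc₀ hD hr
  obtain ⟨θm, hθm, θ_rate⟩ := exists_tendsto_atBot_of_deriv_isBigO hμ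
    (fun t ht => hasDerivAt_pi.2 (hsol t ht).2.1)
    (isBigO_pi.2 fun i => rate (by linarith) (hp.pdOmega_isBigO i))
  obtain ⟨ρm, hρm, ρ_rate⟩ := exists_tendsto_atBot_of_deriv_isBigO (ν := 1 + μ) (by linarith)
    (fun t ht => (hsol t ht).2.2.1) (by
      rw [← add_assoc, one_add_one_eq_two]
      exact (rate (by linarith) hp.pdR_isBigO).neg_left)
  obtain ⟨ωm, hωm, ω_rate⟩ := exists_tendsto_atBot_of_deriv_isBigO hμ
    (fun t ht => hasDerivAt_pi.2 (hsol t ht).2.2.2)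
    (isBigO_pi.2 fun i => (rate (by linarith) (hp.pdTheta_isBigO i)).neg_left)
  rw [neg_add'] at ρ_rate
  obtain ⟨C, hC, θ_bound, ρ_bound, ω_bound⟩ := ((eventually_gt_atTop 0).and <|
    (eventually_abs_le_mul_one_add_abs_rpow ((eNorm_isBigO _ _).trans θ_rate)).and <|
    (eventually_abs_le_mul_one_add_abs_rpow ρ_rate).and <|
    eventually_abs_le_mul_one_add_abs_rpow ((eNorm_isBigO _ _).trans ω_rate)).exists
  exact ⟨θm, ρm, ωm, hθm, hρm, hωm, C, hC, fun t ht =>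
    ⟨(le_abs_self _).trans (θ_bound t ht), ρ_bound t ht, (le_abs_self _).trans (ω_bound t ht)⟩⟩

end ScatteringData

/-- Existence of scattering data `θ₋, ρ⁻, ω⁻` with rates. -/
theorem statement_8 {m : ℕ} (hm : 1 ≤ m) {μ : ℝ} (hμ : μ ∈ Ioo (0:ℝ) 1)
    {U : Set (Fin m → ℝ)} (hU : IsOpen U) (c : Coeffs m μ U)
    (K : Set (Fin m → ℝ)) (hK : IsCompact K) (hKU : K ⊆ U) (T₀ : ℝ)
    (c₀ C₀ : ℝ) (hc₀ : 0 < c₀) (hC₀ : 0 < C₀)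
    (r : ℝ → ℝ) (θ : ℝ → Fin m → ℝ) (ρ : ℝ → ℝ) (ω : ℝ → Fin m → ℝ)
    (hsol : IsHamSolOn c.p r θ ρ ω (Iic T₀))
    (hdom : ∀ t ≤ T₀, r t ∈ Ioi (1:ℝ) ∧ θ t ∈ K ∧ r t ≥ c₀ * (1 + |t|) ∧
      |ρ t| ≤ C₀ ∧ eNorm (ω t) ≤ C₀) :
    ∃ (θm : Fin m → ℝ) (ρm : ℝ) (ωm : Fin m → ℝ),
      Tendsto θ atBot (𝓝 θm) ∧ Tendsto ρ atBot (𝓝 ρm) ∧ Tendsto ω atBot (𝓝 ωm) ∧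
      ∃ C > (0:ℝ), ∀ t ≤ T₀,
        eNorm (θm - θ t) ≤ C * (1 + |t|) ^ (-μ) ∧
        |ρm - ρ t| ≤ C * (1 + |t|) ^ (-(1:ℝ) - μ) ∧
        eNorm (ωm - ω t) ≤ C * (1 + |t|) ^ (-μ) := by
  exact statement_8_general hμ.1 (c.isShortRangeOn_p hμ.2.le hU hK hKU) hc₀ hsol
    (fun t ht => ⟨(hdom t ht).1, (hdom t ht).2.1, (hdom t ht).2.2.2⟩)
    (fun t ht => (hdom t ht).2.2.1)

end Scattering
end
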